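/- arXiv:1411.6363 — 2 statements merged into one kernel-verified Lean document; each statement's English description precedes it below -/
import Mathlib

section
/- Let n be a positive integer, let σ and σ' be decorated permutations of order n, and let a < b < c < a + n be integers. Suppose (a c) is an allowed boundary transposition for σ, (b c) is an allowed boundary transposition for σ', and σ ∘ t_{a,c} = σ' ∘ t_{b,c}. Then ρ := σ ∘ t_{b,c} is a decorated permutation of order n, (b c) is an allowed boundary transposition for ρ with ρ ∘ t_{b,c} = σ, and (a b) is an allowed boundary transposition for ρ with ρ ∘ t_{a,b} = σ'. (Thus σ and σ' have a common parent in the poset of decorated permutations, forming a quadrilateral.) -/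
/-- A decorated permutation of order `n`: a bijection `σ : ℤ → ℤ` with
`σ (i + n) = σ i + n` and `i ≤ σ i ≤ i + n` for all `i`. -/
def IsDecoratedPerm (n : ℤ) (σ : ℤ → ℤ) : Prop :=
  Function.Bijective σ ∧ (∀ i : ℤ, σ (i + n) = σ i + n) ∧ ∀ i : ℤ, i ≤ σ i ∧ σ i ≤ i + n

/-- The affine transposition `t_{a,b}`: swaps `a + m*n` and `b + m*n` for every `m : ℤ`
and fixes all integers not congruent to `a` or `b` modulo `n`. -/
def affT (n a b : ℤ) (i : ℤ) : ℤ :=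
  if (i - a) % n = 0 then i + (b - a)
  else if (i - b) % n = 0 then i - (b - a)
  else i

/-- `(a b)` is an allowed boundary transposition for `σ`: `a < b < a + n`,
`b ≤ σ a < σ b ≤ a + n`, and there is no `q` with `a < q < b` and `σ a < σ q < σ b`. -/
def AllowedBT (n : ℤ) (σ : ℤ → ℤ) (a b : ℤ) : Prop :=
  a < b ∧ b < a + n ∧ b ≤ σ a ∧ σ a < σ b ∧ σ b ≤ a + n ∧
    ¬ ∃ q : ℤ, a < q ∧ q < b ∧ σ a < σ q ∧ σ q < σ b

theorem aux_ndvd (n x m k : ℤ) (h0 : 0 < x) (h1 : x < n) : x + m * n ≠ k * n := by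
  intro h
  have h2 : x = (k - m) * n := by linarith
  have h3 : n ∣ x := ⟨k - m, by linarith⟩
  have := Int.le_of_dvd h0 h3
  omega

theorem affT_left (n a b m : ℤ) : affT n a b (a + m * n) = b + m * n := by
  unfold affT
  rw [if_pos (by rw [show a + m * n - a = m * n by ring]; exact Int.mul_emod_left m n)]
  ring

theorem affT_right (n a b m : ℤ) (h0 : a < b) (h1 : b < a + n) :
    affT n a b (b + m * n) = a + m * n := by
  unfold affT
  rw [if_neg, if_pos]
  · ring
  · rw [show b + m * n - b = m * n by ring]; exact Int.mul_emod_left m n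
  · intro h
    obtain ⟨k, hk⟩ := Int.dvd_of_emod_eq_zero h
    exact aux_ndvd n (b - a) m k (by omega) (by omega) (by linarith)

theorem affT_other (n a b i : ℤ) (ha : ∀ m, i ≠ a + m * n) (hb : ∀ m, i ≠ b + m * n) :
    affT n a b i = i := by
  unfold affT
  rw [if_neg, if_neg]
  · intro h
    obtain ⟨k, hk⟩ := Int.dvd_of_emod_eq_zero h
    exact hb k (by linarith)
  · intro h
    obtain ⟨k, hk⟩ := Int.dvd_of_emod_eq_zero h
    exact ha k (by linarith)

theorem affT_invol (n a b i : ℤ) (h0 : a < b) (h1 : b < a + n) :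
    affT n a b (affT n a b i) = i := by
  by_cases ha : ∃ m, i = a + m * n
  · obtain ⟨m, rfl⟩ := ha
    rw [affT_left, affT_right n a b m h0 h1]
  by_cases hb : ∃ m, i = b + m * n
  · obtain ⟨m, rfl⟩ := hb
    rw [affT_right n a b m h0 h1, affT_left]
  push Not at ha hb
  rw [affT_other n a b i ha hb, affT_other n a b i ha hb]

theorem affT_shift (n a b i : ℤ) : affT n a b (i + n) = affT n a b i + n := by
  unfold affT
  rw [show i + n - a = i - a + n by ring, show i + n - b = i - b + n by ring,
    Int.add_emod_right, Int.add_emod_right]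
  split_ifs <;> ring

theorem per_mul (n : ℤ) (σ : ℤ → ℤ) (h : ∀ i : ℤ, σ (i + n) = σ i + n) (i m : ℤ) :
    σ (i + m * n) = σ i + m * n := by
  induction m using Int.induction_on with
  | zero => simp
  | succ k ih =>
    rw [show i + ((k : ℤ) + 1) * n = i + k * n + n by ring, h, ih]; ring
  | pred k ih =>
    have := h (i + (-(k : ℤ) - 1) * n)
    rw [show i + (-(k : ℤ) - 1) * n + n = i + (-(k : ℤ)) * n by ring, ih] at this
    linarith

/-- Case `(a c)` vs `(b c)` with `a < b < c < a + n`: `σ` and `σ'`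
have a common parent `ρ = σ ∘ t_{b,c}`, forming a quadrilateral in the poset. -/
theorem common_parent_ac_bc (n : ℤ) (hn : 0 < n) (σ σ' : ℤ → ℤ)
    (hσ : IsDecoratedPerm n σ) (hσ' : IsDecoratedPerm n σ')
    (a b c : ℤ) (hab : a < b) (hbc : b < c) (hca : c < a + n)
    (h1 : AllowedBT n σ a c) (h2 : AllowedBT n σ' b c)
    (heq : σ ∘ affT n a c = σ' ∘ affT n b c) :
    IsDecoratedPerm n (σ ∘ affT n b c) ∧
    AllowedBT n (σ ∘ affT n b c) b c ∧ (σ ∘ affT n b c) ∘ affT n b c = σ ∧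
    AllowedBT n (σ ∘ affT n b c) a b ∧ (σ ∘ affT n b c) ∘ affT n a b = σ' := by
  obtain ⟨-, -, h1a, h1b, h1c, h1d⟩ := h1
  obtain ⟨-, hcb, h2a, h2b, h2c, h2d⟩ := h2
  obtain ⟨hbij, hper, hbd⟩ := hσ
  have hpm := per_mul n σ hper
  have ne : ∀ x y m k : ℤ, x < y → y < x + n → y + m * n ≠ x + k * n := by
    intro x y m k hx hy h
    exact aux_ndvd n (y - x) m k (by omega) (by omega) (by linarith)
  have hA : ∀ i, σ' i = σ (affT n a c (affT n b c i)) := by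
    intro i
    have := congrFun heq (affT n b c i)
    simp only [Function.comp] at this
    rw [this, affT_invol n b c i hbc hcb]
  have L : ∀ x y, affT n x y x = y := fun x y => by simpa using affT_left n x y 0
  have R : ∀ x y, x < y → y < x + n → affT n x y y = x := fun x y h h' => by
    simpa using affT_right n x y 0 h h'
  have M : ∀ x y q, x < q → q < y → y < x + n → affT n x y q = q := by
    intro x y q h h' h''
    apply affT_other
    · intro m hm
      exact ne x q 0 m h (by omega) (by linarith)
    · intro m hm
      exact ne q y m 0 h' (by omega) (by linarith)
  have hBa : affT n b c a = a := by
    apply affT_other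
    · intro m hm
      exact ne a b m 0 hab (by omega) (by linarith)
    · intro m hm
      exact ne a c m 0 (by omega) (by omega) (by linarith)
  have sb : σ' b = σ a := by rw [hA, L, R a c (by omega) hca]
  have sc : σ' c = σ b := by rw [hA, R b c hbc hcb, M a c b hab hbc hca]
  have sq : ∀ q, b < q → q < c → σ' q = σ q := by
    intro q h h'
    rw [hA, M b c q h h' hcb, M a c q (by omega) h' hca]
  rw [sb] at h2a h2b h2d
  rw [sc] at h2b h2c h2d
  have hcσb : σ c < σ b := by
    by_contra hlt
    have hne : σ b ≠ σ c := fun h => by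
      have := hbij.1 h
      omega
    exact h1d ⟨b, hab, hbc, h2b, by omega⟩
  have hc := hbd c
  have hb := hbd b
  refine ⟨⟨?_, ?_, ?_⟩, ⟨hbc, hcb, ?_⟩, ?_, ⟨hab, by omega, ?_⟩, ?_⟩
  · exact hbij.comp (Function.Involutive.bijective fun i => affT_invol n b c i hbc hcb)
  · intro i
    simp only [Function.comp]
    rw [affT_shift, hper]
  · intro i
    simp only [Function.comp]
    by_cases hib : ∃ m, i = b + m * n
    · obtain ⟨m, rfl⟩ := hib
      rw [affT_left, hpm]
      constructor <;> linarith
    by_cases hic : ∃ m, i = c + m * n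
    · obtain ⟨m, rfl⟩ := hic
      rw [affT_right n b c m hbc hcb, hpm]
      constructor <;> linarith
    push Not at hib hic
    rw [affT_other n b c i hib hic]
    exact hbd i
  · simp only [Function.comp]
    rw [L, R b c hbc hcb]
    refine ⟨by omega, hcσb, h2c, ?_⟩
    rintro ⟨q, q1, q2, q3, q4⟩
    rw [M b c q q1 q2 hcb] at q3 q4
    exact h2d ⟨q, q1, q2, by rw [sq q q1 q2]; omega, by rw [sq q q1 q2]; omega⟩
  · funext i
    simp only [Function.comp]
    rw [affT_invol n b c i hbc hcb]
  · simp only [Function.comp]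
    rw [L, hBa]
    refine ⟨by omega, h1b, h1c, ?_⟩
    rintro ⟨q, q1, q2, q3, q4⟩
    have : affT n b c q = q := by
      apply affT_other
      · intro m hm
        exact ne q b m 0 q2 (by omega) (by linarith)
      · intro m hm
        exact ne q c m 0 (by omega) (by omega) (by linarith)
    rw [this] at q3 q4
    exact h1d ⟨q, q1, by omega, q3, q4⟩
  · funext i
    rw [hA]
    simp only [Function.comp]
    congr 1
    by_cases hia : ∃ m, i = a + m * n
    · obtain ⟨m, rfl⟩ := hia
      rw [affT_left, affT_left, affT_other n b c (a + m * n), affT_left]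
      · intro k hk
        exact ne a b k m hab (by omega) hk.symm
      · intro k hk
        exact ne a c k m (by omega) (by omega) hk.symm
    by_cases hib : ∃ m, i = b + m * n
    · obtain ⟨m, rfl⟩ := hib
      rw [affT_left, affT_right n a b m hab (by omega), affT_right n a c m (by omega) hca]
      apply affT_other
      · intro k hk
        exact ne a b k m hab (by omega) hk.symm
      · intro k hk
        exact ne a c k m (by omega) (by omega) hk.symm
    by_cases hic : ∃ m, i = c + m * n
    · obtain ⟨m, rfl⟩ := hic
      rw [affT_right n b c m hbc hcb, affT_other n a b (c + m * n),
        affT_right n b c m hbc hcb, affT_other n a c (b + m * n)]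
      · intro k
        exact ne a b m k hab (by omega)
      · intro k hk
        exact ne b c k m hbc hcb hk.symm
      · intro k
        exact ne a c m k (by omega) (by omega)
      · intro k
        exact ne b c m k hbc hcb
    push Not at hia hib hic
    rw [affT_other n a b i hia hib, affT_other n b c i hib hic, affT_other n a c i hia hic]
end

section
/- Let n be a positive integer, let σ and σ' be decorated permutations of order n, and let a < b < c < a + n be integers. Suppose (a b) is an allowed boundary transposition for σ, (b c) is an allowed boundary transposition for σ', σ ∘ t_{a,b} = σ' ∘ t_{b,c}, and for every integer q with a < q < b or b < q < c one has σ(q) ∈ {q, q + n}. Set σ̃ = σ ∘ t_{b,c}, σ̃' = σ' ∘ t_{a,b}, and ρ = σ ∘ t_{b,c} ∘ t_{a,b}. Then σ̃, σ̃', and ρ are decorated permutations of order n; (b c) is an allowed boundary transposition for σ̃ with σ̃ ∘ t_{b,c} = σ; (a b) is an allowed boundary transposition for σ̃' with σ̃' ∘ t_{a,b} = σ'; (a b) is an allowed boundary transposition for ρ with ρ ∘ t_{a,b} = σ̃; (b c) is an allowed boundary transposition for ρ with ρ ∘ t_{b,c} = σ̃'; in particular σ ∘ t_{b,c} ∘ t_{a,b}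 = σ' ∘ t_{a,b} ∘ t_{b,c}, so σ and σ' have a common grandparent in the poset of decorated permutations. -/
theorem affT_left_s10 (n u v k : ℤ) : affT n u v (u + n * k) = v + n * k := by
  unfold affT
  rw [if_pos (by rw [show u + n * k - u = n * k by ring]; simp)]
  ring

theorem affT_right_s10 (n u v k : ℤ) (h1 : u < v) (h2 : v < u + n) :
    affT n u v (v + n * k) = u + n * k := by
  unfold affT
  rw [if_neg, if_pos (by rw [show v + n * k - v = n * k by ring]; simp)]
  · ring
  · rw [show v + n * k - u = (v - u) + n * k by ring, Int.add_mul_emod_self_left,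
      Int.emod_eq_of_lt (by omega) (by omega)]
    omega

theorem affT_other_s10 (n u v i : ℤ) (h1 : ∀ k, i ≠ u + n * k) (h2 : ∀ k, i ≠ v + n * k) :
    affT n u v i = i := by
  unfold affT
  rw [if_neg, if_neg]
  · intro h
    obtain ⟨k, hk⟩ := Int.dvd_of_emod_eq_zero h
    exact h2 k (by linarith)
  · intro h
    obtain ⟨k, hk⟩ := Int.dvd_of_emod_eq_zero h
    exact h1 k (by linarith)

theorem ne_res (n u v k l : ℤ) (h1 : u < v) (h2 : v < u + n) : u + n * k ≠ v + n * l := by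
  intro h
  have h3 : n * (k - l) = v - u := by linarith
  have h4 : 0 < k - l := by
    by_contra hc
    have := mul_nonneg (show 0 ≤ n by omega) (show 0 ≤ -(k - l) by omega)
    linarith
  have := mul_le_mul_of_nonneg_left (show 1 ≤ k - l by omega) (show 0 ≤ n by omega)
  linarith

theorem affT_left0 (n u v : ℤ) : affT n u v u = v := by
  simpa using affT_left_s10 n u v 0

theorem affT_right0 (n u v : ℤ) (h1 : u < v) (h2 : v < u + n) : affT n u v v = u := by
  simpa using affT_right_s10 n u v 0 h1 h2

theorem affT_fix (n u v w k : ℤ) (h1 : u < w ∧ w < u + n ∨ w < u ∧ u < w + n)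
    (h2 : v < w ∧ w < v + n ∨ w < v ∧ v < w + n) :
    affT n u v (w + n * k) = w + n * k := by
  apply affT_other_s10
  · intro l
    rcases h1 with h | h
    · exact (ne_res n u w l k h.1 h.2).symm
    · exact ne_res n w u k l h.1 h.2
  · intro l
    rcases h2 with h | h
    · exact (ne_res n v w l k h.1 h.2).symm
    · exact ne_res n w v k l h.1 h.2

theorem affT_fix0 (n u v w : ℤ) (h1 : u < w ∧ w < u + n ∨ w < u ∧ u < w + n)
    (h2 : v < w ∧ w < v + n ∨ w < v ∧ v < w + n) :
    affT n u v w = w := by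
  simpa using affT_fix n u v w 0 h1 h2

theorem affT_invol_s10 (n u v : ℤ) (h1 : u < v) (h2 : v < u + n) (i : ℤ) :
    affT n u v (affT n u v i) = i := by
  by_cases hu : ∃ k, i = u + n * k
  · obtain ⟨k, rfl⟩ := hu
    rw [affT_left_s10, affT_right_s10 _ _ _ _ h1 h2]
  by_cases hv : ∃ k, i = v + n * k
  · obtain ⟨k, rfl⟩ := hv
    rw [affT_right_s10 _ _ _ _ h1 h2, affT_left_s10]
  push Not at hu hv
  rw [affT_other_s10 _ _ _ _ hu hv, affT_other_s10 _ _ _ _ hu hv]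

theorem affT_invol_comp (n u v : ℤ) (h1 : u < v) (h2 : v < u + n) (f : ℤ → ℤ) :
    (f ∘ affT n u v) ∘ affT n u v = f := by
  funext i
  simp [affT_invol_s10 n u v h1 h2 i]

theorem affT_braid (n a b c : ℤ) (hab : a < b) (hbc : b < c) (hca : c < a + n) (i : ℤ) :
    affT n b c (affT n a b (affT n b c i)) = affT n a b (affT n b c (affT n a b i)) := by
  have L := affT_left_s10 n
  have R1 := fun k => affT_right_s10 n a b k hab (by omega)
  have R2 := fun k => affT_right_s10 n b c k hbc (by omega)
  have F1 := fun k => affT_fix n a b c k (by omega) (by omega)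
  have F2 := fun k => affT_fix n b c a k (by omega) (by omega)
  by_cases ha : ∃ k, i = a + n * k
  · obtain ⟨k, rfl⟩ := ha
    simp only [L, R1, R2, F1, F2]
  by_cases hb : ∃ k, i = b + n * k
  · obtain ⟨k, rfl⟩ := hb
    simp only [L, R1, R2, F1, F2]
  by_cases hc : ∃ k, i = c + n * k
  · obtain ⟨k, rfl⟩ := hc
    simp only [L, R1, R2, F1, F2]
  push Not at ha hb hc
  simp only [affT_other_s10 _ _ _ _ ha hb, affT_other_s10 _ _ _ _ hb hc]

theorem affT_add (n u v i : ℤ) : affT n u v (i + n) = affT n u v i + n := by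
  unfold affT
  rw [show i + n - u = (i - u) + n by ring, show i + n - v = (i - v) + n by ring,
    Int.add_emod_right, Int.add_emod_right]
  split_ifs <;> ring

theorem periodic_mul (n : ℤ) (σ : ℤ → ℤ) (h : ∀ i, σ (i + n) = σ i + n) (i k : ℤ) :
    σ (i + n * k) = σ i + n * k := by
  induction k using Int.induction_on with
  | zero => simp
  | succ k ih =>
    rw [show i + n * ((k : ℤ) + 1) = (i + n * k) + n by ring, h, ih]
    ring
  | pred k ih =>
    have := h (i + n * (-(k : ℤ) - 1))
    rw [show i + n * (-(k : ℤ) - 1) + n = i + n * (-k) by ring, ih] at this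
    linarith

theorem dec_comp (n u v : ℤ) (σ : ℤ → ℤ) (hσ : IsDecoratedPerm n σ) (h1 : u < v)
    (h2 : v < u + n) (hu1 : u ≤ σ v) (hu2 : σ v ≤ u + n) (hv1 : v ≤ σ u) (hv2 : σ u ≤ v + n) :
    IsDecoratedPerm n (σ ∘ affT n u v) := by
  obtain ⟨hb, hp, hbd⟩ := hσ
  refine ⟨hb.comp (Function.Involutive.bijective (affT_invol_s10 n u v h1 h2)), ?_, ?_⟩
  · intro i
    simp only [Function.comp, affT_add, hp]
  · intro i
    simp only [Function.comp]
    by_cases hu : ∃ k, i = u + n * k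
    · obtain ⟨k, rfl⟩ := hu
      rw [affT_left_s10, periodic_mul n σ hp]
      constructor <;> linarith
    by_cases hv : ∃ k, i = v + n * k
    · obtain ⟨k, rfl⟩ := hv
      rw [affT_right_s10 _ _ _ _ h1 h2, periodic_mul n σ hp]
      constructor <;> linarith
    push Not at hu hv
    rw [affT_other_s10 _ _ _ _ hu hv]
    exact hbd i

/-- Case `(a b)` vs `(b c)` with `a < b < c < a + n` for adjacent charts:
`σ` and `σ'` have a common grandparent `ρ = σ ∘ t_{b,c} ∘ t_{a,b} = σ' ∘ t_{a,b} ∘ t_{b,c}`. -/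
theorem common_grandparent_ab_bc (n : ℤ) (hn : 0 < n) (σ σ' : ℤ → ℤ)
    (hσ : IsDecoratedPerm n σ) (hσ' : IsDecoratedPerm n σ')
    (a b c : ℤ) (hab : a < b) (hbc : b < c) (hca : c < a + n)
    (h1 : AllowedBT n σ a b) (h2 : AllowedBT n σ' b c)
    (heq : σ ∘ affT n a b = σ' ∘ affT n b c)
    (hadj : ∀ q : ℤ, (a < q ∧ q < b) ∨ (b < q ∧ q < c) → σ q = q ∨ σ q = q + n) :
    IsDecoratedPerm n (σ ∘ affT n b c) ∧
    IsDecoratedPerm n (σ' ∘ affT n a b) ∧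
    IsDecoratedPerm n ((σ ∘ affT n b c) ∘ affT n a b) ∧
    (AllowedBT n (σ ∘ affT n b c) b c ∧ (σ ∘ affT n b c) ∘ affT n b c = σ) ∧
    (AllowedBT n (σ' ∘ affT n a b) a b ∧ (σ' ∘ affT n a b) ∘ affT n a b = σ') ∧
    (AllowedBT n ((σ ∘ affT n b c) ∘ affT n a b) a b ∧
      ((σ ∘ affT n b c) ∘ affT n a b) ∘ affT n a b = σ ∘ affT n b c) ∧
    (AllowedBT n ((σ ∘ affT n b c) ∘ affT n a b) b c ∧
      ((σ ∘ affT n b c) ∘ affT n a b) ∘ affT n b c = σ' ∘ affT n a b) ∧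
    (σ ∘ affT n b c) ∘ affT n a b = (σ' ∘ affT n a b) ∘ affT n b c := by
  have e1 : b < a + n := by omega
  have e2 : c < b + n := by omega
  have L1 := affT_left0 n a b
  have L2 := affT_left0 n b c
  have R1 := affT_right0 n a b hab e1
  have R2 := affT_right0 n b c hbc e2
  have F1 := affT_fix0 n a b c (by omega) (by omega)
  have F2 := affT_fix0 n b c a (by omega) (by omega)
  have hs : σ' = (σ ∘ affT n a b) ∘ affT n b c := by
    rw [heq, affT_invol_comp n b c hbc e2]
  have sa : σ' a = σ b := by rw [hs]; simp [F2, L1]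
  have sb : σ' b = σ c := by rw [hs]; simp [L2, F1]
  have sc : σ' c = σ a := by rw [hs]; simp [R2, R1]
  obtain ⟨-, -, p1, p2, p3, -⟩ := h1
  obtain ⟨-, -, q1, q2, q3, -⟩ := h2
  rw [sb] at q1 q2
  rw [sc] at q2 q3
  have G1 : ∀ q, a < q → q < b → affT n a b q = q := fun q _ _ =>
    affT_fix0 n a b q (by omega) (by omega)
  have G2 : ∀ q, a < q → q < b → affT n b c q = q := fun q _ _ =>
    affT_fix0 n b c q (by omega) (by omega)
  have G3 : ∀ q, b < q → q < c → affT n a b q = q := fun q _ _ =>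
    affT_fix0 n a b q (by omega) (by omega)
  have G4 : ∀ q, b < q → q < c → affT n b c q = q := fun q _ _ =>
    affT_fix0 n b c q (by omega) (by omega)
  have D1 : IsDecoratedPerm n (σ ∘ affT n b c) :=
    dec_comp n b c σ hσ hbc e2 (by omega) (by omega) (by omega) (by omega)
  have D2 : IsDecoratedPerm n (σ' ∘ affT n a b) :=
    dec_comp n a b σ' hσ' hab e1 (by omega) (by omega) (by omega) (by omega)
  have D3 : IsDecoratedPerm n ((σ ∘ affT n b c) ∘ affT n a b) := by
    apply dec_comp n a b _ D1 hab e1 <;> simp only [Function.comp, L2, F2] <;> omega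
  have key : (σ ∘ affT n b c) ∘ affT n a b = (σ' ∘ affT n a b) ∘ affT n b c := by
    funext i
    rw [hs]
    simp only [Function.comp]
    rw [affT_braid n a b c hab hbc hca i, affT_invol_s10 n a b hab e1]
  refine ⟨D1, D2, D3, ⟨⟨hbc, e2, ?_⟩, affT_invol_comp n b c hbc e2 σ⟩,
    ⟨⟨hab, e1, ?_⟩, affT_invol_comp n a b hab e1 σ'⟩,
    ⟨⟨hab, e1, ?_⟩, affT_invol_comp n a b hab e1 _⟩, ⟨⟨hbc, e2, ?_⟩, ?_⟩, key⟩
  · simp only [Function.comp, L2, R2]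
    refine ⟨by omega, by omega, by omega, ?_⟩
    rintro ⟨q, h3, h4, h5, h6⟩
    rw [G4 q h3 h4] at h5 h6
    rcases hadj q (Or.inr ⟨h3, h4⟩) with h | h <;> omega
  · simp only [Function.comp, L1, R1]
    refine ⟨by omega, by omega, by omega, ?_⟩
    rintro ⟨q, h3, h4, h5, h6⟩
    rw [G1 q h3 h4, hs] at h5 h6
    simp only [Function.comp, G1 q h3 h4, G2 q h3 h4, F2, L2, F1, L1] at h5 h6
    rcases hadj q (Or.inl ⟨h3, h4⟩) with h | h <;> omega
  · simp only [Function.comp, L1, R1, L2, F2]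
    refine ⟨by omega, by omega, by omega, ?_⟩
    rintro ⟨q, h3, h4, h5, h6⟩
    rw [G1 q h3 h4, G2 q h3 h4] at h5 h6
    rcases hadj q (Or.inl ⟨h3, h4⟩) with h | h <;> omega
  · simp only [Function.comp, R1, F1, F2, R2]
    refine ⟨by omega, by omega, by omega, ?_⟩
    rintro ⟨q, h3, h4, h5, h6⟩
    rw [G3 q h3 h4, G4 q h3 h4] at h5 h6
    rcases hadj q (Or.inr ⟨h3, h4⟩) with h | h <;> omega
  · rw [key, affT_invol_comp n b c hbc e2]
end
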